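/- arXiv:2108.11210 — 2 statements merged into one kernel-verified Lean document; each statement's English description precedes it below -/
import Mathlib

section
/- Let q ≥ 0 with q not of the form k + 1/2 for a nonnegative integer k, let η ∈ ℝ be fixed, and let 0 < c < 1. Define F_q^{(1)}(η,β) = (1/(2π)) ∫_{-∞}^∞ e^{η(c+it)} (π(c+it)/sin(π(c+it))) M(q+1; q+5/2; 2(c+it)/β) /(c+it) dt, coefficients c_k = 2^k (q+1)_k/(k! (q+5/2)_k), and Φ_k^{(1)}(η) = (1/2) ∫_{-∞}^∞ e^{η(c+it)} (c+it)^k / sin(π(c+it)) dt. Then for every integer N ≥ 1, as β → +∞, F_q^{(1)}(η,β) − Σ_{k=0}^{N−1} c_k β^{−k} Φ_k^{(1)}(η) = O(β^{−N}). -/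
open Real MeasureTheory Set Finset Filter Asymptotics

/-- Kummer's confluent hypergeometric function `M(a;b;z)` as a power series. -/
noncomputable def kummerM (a b z : ℂ) : ℂ :=
  ∑' k : ℕ, (ascPochhammer ℂ k).eval a /
      ((ascPochhammer ℂ k).eval b * (k.factorial : ℂ)) * z ^ k

/-- The function `F_q^{(1)}(η,β)`. -/
noncomputable def F1 (q c η β : ℝ) : ℂ :=
  (1 / (2 * (π : ℂ))) * ∫ t : ℝ,
    Complex.exp ((η : ℂ) * ((c : ℂ) + t * Complex.I)) *
      ((π : ℂ) * ((c : ℂ) + t * Complex.I) /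
        Complex.sin ((π : ℂ) * ((c : ℂ) + t * Complex.I))) *
      kummerM ((q : ℂ) + 1) ((q : ℂ) + 5 / 2)
        (2 * ((c : ℂ) + t * Complex.I) / (β : ℂ)) / ((c : ℂ) + t * Complex.I)

/-- The coefficients `c_k = 2^k (q+1)_k/(k! (q+5/2)_k)`. -/
noncomputable def ccoef (q : ℝ) (k : ℕ) : ℝ :=
  2 ^ k * (ascPochhammer ℝ k).eval (q + 1) /
    (k.factorial * (ascPochhammer ℝ k).eval (q + 5 / 2))

/-- The auxiliary function `Φ_k^{(1)}(η)`. -/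
noncomputable def Phi1 (c : ℝ) (k : ℕ) (η : ℝ) : ℂ :=
  (1 / 2 : ℂ) * ∫ t : ℝ, Complex.exp ((η : ℂ) * ((c : ℂ) + t * Complex.I)) *
      ((c : ℂ) + t * Complex.I) ^ k / Complex.sin ((π : ℂ) * ((c : ℂ) + t * Complex.I))

noncomputable def kA (q : ℝ) (k : ℕ) : ℝ :=
  (ascPochhammer ℝ k).eval (q + 1) / ((ascPochhammer ℝ k).eval (q + 5 / 2) * (k.factorial : ℝ))

lemma poch_cast (x : ℝ) (k : ℕ) :
    (ascPochhammer ℂ k).eval (x : ℂ) = (((ascPochhammer ℝ k).eval x : ℝ) : ℂ) := by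
  rw [← ascPochhammer_map Complex.ofRealHom k]
  exact Polynomial.eval_map_apply (f := Complex.ofRealHom) (p := ascPochhammer ℝ k) x

lemma poch_mono (x y : ℝ) (hx : 0 < x) (hxy : x ≤ y) (k : ℕ) :
    (ascPochhammer ℝ k).eval x ≤ (ascPochhammer ℝ k).eval y := by
  induction k with
  | zero => simp
  | succ k ih =>
    rw [ascPochhammer_succ_eval, ascPochhammer_succ_eval]
    have := ascPochhammer_pos k x hx
    have := ascPochhammer_pos k y (hx.trans_le hxy)
    gcongr

lemma kA_nonneg (q : ℝ) (hq : 0 ≤ q) (k : ℕ) : 0 ≤ kA q k := by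
  have := ascPochhammer_pos k (q + 1) (by linarith)
  have := ascPochhammer_pos k (q + 5 / 2) (by linarith)
  unfold kA; positivity

lemma kA_le (q : ℝ) (hq : 0 ≤ q) (k : ℕ) : kA q k ≤ 1 / (k.factorial : ℝ) := by
  have h1 := ascPochhammer_pos k (q + 5 / 2) (by linarith)
  have h2 := poch_mono (q + 1) (q + 5 / 2) (by linarith) (by linarith) k
  have h3 : (0 : ℝ) < k.factorial := by positivity
  unfold kA
  rw [div_le_div_iff₀ (by positivity) h3]
  nlinarith

lemma kummer_eq (q : ℝ) (z : ℂ) :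
    kummerM ((q : ℂ) + 1) ((q : ℂ) + 5 / 2) z = ∑' k : ℕ, (kA q k : ℂ) * z ^ k := by
  unfold kummerM
  congr 1
  ext k
  have h1 := poch_cast (q + 1) k
  have h2 := poch_cast (q + 5 / 2) k
  push_cast at h1 h2
  rw [h1, h2]
  unfold kA
  push_cast
  rfl

lemma kA_term (q : ℝ) (hq : 0 ≤ q) (z : ℂ) (N k : ℕ) :
    ‖(kA q (k + N) : ℂ) * z ^ (k + N)‖ ≤ ‖z‖ ^ N * (‖z‖ ^ k / (k.factorial : ℝ)) := by
  rw [norm_mul, norm_pow, Complex.norm_real, Real.norm_of_nonneg (kA_nonneg q hq _)]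
  have h1 : kA q (k + N) ≤ 1 / (k.factorial : ℝ) := by
    refine (kA_le q hq _).trans ?_
    have : (k.factorial : ℝ) ≤ (k + N).factorial := by
      exact_mod_cast Nat.factorial_le (Nat.le_add_right k N)
    have : (0 : ℝ) < k.factorial := by positivity
    gcongr
  calc _ ≤ 1 / (k.factorial : ℝ) * ‖z‖ ^ (k + N) := by gcongr
    _ = _ := by rw [pow_add]; ring

lemma exp_hasSum (x : ℝ) : HasSum (fun k : ℕ => x ^ k / (k.factorial : ℝ)) (Real.exp x) := by
  rw [Real.exp_eq_exp_ℝ]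
  exact NormedSpace.expSeries_div_hasSum_exp x

lemma kA_summable (q : ℝ) (hq : 0 ≤ q) (z : ℂ) :
    Summable (fun k : ℕ => (kA q k : ℂ) * z ^ k) := by
  refine Summable.of_norm_bounded (exp_hasSum ‖z‖).summable (fun k => ?_)
  simpa using kA_term q hq z 0 k

lemma kummer_rem (q : ℝ) (hq : 0 ≤ q) (z : ℂ) (N : ℕ) :
    ‖kummerM ((q : ℂ) + 1) ((q : ℂ) + 5 / 2) z - ∑ k ∈ Finset.range N, (kA q k : ℂ) * z ^ k‖
      ≤ ‖z‖ ^ N * Real.exp ‖z‖ := by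
  rw [kummer_eq, ← (kA_summable q hq z).sum_add_tsum_nat_add N, add_sub_cancel_left]
  exact tsum_of_norm_bounded ((exp_hasSum ‖z‖).mul_left _) (kA_term q hq z N)

lemma kummer_meas (q : ℝ) (hq : 0 ≤ q) :
    Measurable (fun z : ℂ => kummerM ((q : ℂ) + 1) ((q : ℂ) + 5 / 2) z) := by
  refine measurable_of_tendsto_metrizable
    (f := fun n z => ∑ k ∈ Finset.range n, (kA q k : ℂ) * z ^ k) (fun n => by fun_prop) ?_
  rw [tendsto_pi_nhds]
  intro z
  rw [kummer_eq]
  exact (kA_summable q hq z).hasSum.tendsto_sum_nat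

lemma exp_neg_abs_integrable : Integrable (fun t : ℝ => Real.exp (-|t|)) := by
  have h1 : IntegrableOn (fun t : ℝ => Real.exp (-|t|)) (Set.Iic 0) := by
    refine (integrableOn_exp_Iic 0).congr_fun (fun t ht => ?_) measurableSet_Iic
    simp only [Set.mem_Iic] at ht
    simp [abs_of_nonpos ht]
  have h2 : IntegrableOn (fun t : ℝ => Real.exp (-|t|)) (Set.Ioi 0) := by
    refine (integrableOn_exp_neg_Ioi 0).congr_fun (fun t ht => ?_) measurableSet_Ioi
    simp only [Set.mem_Ioi] at ht
    simp [abs_of_pos ht]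
  have := h1.union h2
  rwa [Set.Iic_union_Ioi, integrableOn_univ] at this

noncomputable def gker (c η t : ℝ) : ℂ :=
  Complex.exp ((η : ℂ) * ((c : ℂ) + t * Complex.I)) /
    Complex.sin ((π : ℂ) * ((c : ℂ) + t * Complex.I))

lemma sin_lower (c t : ℝ) :
    Real.sin (π * c) * (Real.exp (π * |t|) / 2) ≤
      ‖Complex.sin ((π : ℂ) * ((c : ℂ) + t * Complex.I))‖ ∨ Real.sin (π * c) < 0 := by
  by_cases h : Real.sin (π * c) < 0
  · exact Or.inr h
  left
  push Not at h
  have e : Complex.sin ((π : ℂ) * ((c : ℂ) + t * Complex.I)) =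
      ((Real.sin (π * c) * Real.cosh (π * t) : ℝ) : ℂ) +
        ((Real.cos (π * c) * Real.sinh (π * t) : ℝ) : ℂ) * Complex.I := by
    rw [show (π : ℂ) * ((c : ℂ) + t * Complex.I) = ((π : ℂ) * c) + (π * t) * Complex.I by ring,
      Complex.sin_add_mul_I]
    push_cast
    ring
  have hre : (Complex.sin ((π : ℂ) * ((c : ℂ) + t * Complex.I))).re =
      Real.sin (π * c) * Real.cosh (π * t) := by
    rw [e, Complex.add_re, Complex.re_ofReal_mul, Complex.I_re, Complex.ofReal_re]; ring
  refine le_trans ?_ ((le_abs_self _).trans (Complex.abs_re_le_norm _))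
  rw [hre]
  refine mul_le_mul_of_nonneg_left ?_ h
  rw [← Real.cosh_abs, abs_mul, abs_of_pos Real.pi_pos, Real.cosh_eq]
  have := Real.exp_pos (-(π * |t|))
  linarith

lemma gker_bound (c η t : ℝ) (hc0 : 0 < c) (hc1 : c < 1) :
    ‖gker c η t‖ ≤ Real.exp (η * c) * (2 / Real.sin (π * c)) * Real.exp (-(π * |t|)) := by
  have hs : 0 < Real.sin (π * c) :=
    Real.sin_pos_of_pos_of_lt_pi (by positivity) (by nlinarith [Real.pi_pos])
  have h := (sin_lower c t).resolve_right (not_lt.mpr hs.le)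
  unfold gker
  rw [norm_div, Complex.norm_exp]
  have : ((η : ℂ) * ((c : ℂ) + t * Complex.I)).re = η * c := by simp
  rw [this, Real.exp_neg]
  calc _ ≤ Real.exp (η * c) / (Real.sin (π * c) * (Real.exp (π * |t|) / 2)) := by
        gcongr
    _ = _ := by field_simp

noncomputable def gK (c η : ℝ) (N : ℕ) : ℝ :=
  Real.exp (η * c) * (2 / Real.sin (π * c)) * (N.factorial * Real.exp (2 * c))

lemma s_norm (c t : ℝ) (hc0 : 0 < c) : ‖(c : ℂ) + t * Complex.I‖ ≤ c + |t| := by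
  refine (norm_add_le _ _).trans ?_
  simp [abs_of_pos hc0]

lemma g_total (c η t : ℝ) (hc0 : 0 < c) (hc1 : c < 1) (N : ℕ) :
    ‖gker c η t‖ * (‖(c : ℂ) + t * Complex.I‖ ^ N * Real.exp ‖(c : ℂ) + t * Complex.I‖)
      ≤ gK c η N * Real.exp (-|t|) := by
  have hs : 0 < Real.sin (π * c) :=
    Real.sin_pos_of_pos_of_lt_pi (by positivity) (by nlinarith [Real.pi_pos])
  have h1 := gker_bound c η t hc0 hc1
  have h2 := s_norm c t hc0
  set r := ‖(c : ℂ) + t * Complex.I‖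
  have hr : 0 ≤ r := norm_nonneg _
  have h3 : r ^ N ≤ N.factorial * Real.exp r := by
    have := Real.pow_div_factorial_le_exp r hr N
    rwa [div_le_iff₀' (by positivity)] at this
  have h4 : r ^ N * Real.exp r ≤ N.factorial * Real.exp (2 * c) * Real.exp (2 * |t|) := by
    calc r ^ N * Real.exp r ≤ N.factorial * Real.exp r * Real.exp r := by gcongr
      _ = N.factorial * Real.exp (r + r) := by rw [Real.exp_add]; ring
      _ ≤ N.factorial * Real.exp (2 * c + 2 * |t|) :=
          mul_le_mul_of_nonneg_left (Real.exp_le_exp.2 (by linarith)) (by positivity)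
      _ = _ := by rw [Real.exp_add]; ring
  calc _ ≤ (Real.exp (η * c) * (2 / Real.sin (π * c)) * Real.exp (-(π * |t|))) *
        (N.factorial * Real.exp (2 * c) * Real.exp (2 * |t|)) := by gcongr
    _ = gK c η N * Real.exp (-(π * |t|) + 2 * |t|) := by rw [Real.exp_add]; unfold gK; ring
    _ ≤ _ := by
      have : 0 ≤ gK c η N := by unfold gK; positivity
      gcongr
      nlinarith [Real.pi_gt_three, abs_nonneg t]

lemma gker_meas (c η : ℝ) : Measurable (gker c η) := by
  unfold gker; fun_prop

lemma gpow_integrable (c η : ℝ) (hc0 : 0 < c) (hc1 : c < 1) (k : ℕ) :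
    Integrable (fun t : ℝ => gker c η t * ((c : ℂ) + t * Complex.I) ^ k) := by
  refine (exp_neg_abs_integrable.const_mul (gK c η k)).mono' ?_ (ae_of_all _ fun t => ?_)
  · have := gker_meas c η
    exact Measurable.aestronglyMeasurable (by fun_prop)
  · refine le_trans ?_ (g_total c η t hc0 hc1 k)
    rw [norm_mul, norm_pow]
    gcongr
    exact le_mul_of_one_le_right (by positivity) (Real.one_le_exp (norm_nonneg _))

lemma z_norm (s : ℂ) (β : ℝ) (hβ : 2 ≤ β) : ‖2 * s / (β : ℂ)‖ = 2 / β * ‖s‖ := by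
  rw [norm_div, norm_mul, Complex.norm_real, Real.norm_of_nonneg (by linarith)]
  simp; ring

lemma rem_bound (q c η β t : ℝ) (hq : 0 ≤ q) (hc0 : 0 < c) (hc1 : c < 1) (hβ : 2 ≤ β) (N : ℕ) :
    ‖gker c η t * (kummerM ((q : ℂ) + 1) ((q : ℂ) + 5 / 2)
        (2 * ((c : ℂ) + t * Complex.I) / (β : ℂ)) -
        ∑ k ∈ Finset.range N, (kA q k : ℂ) * (2 * ((c : ℂ) + t * Complex.I) / (β : ℂ)) ^ k)‖
      ≤ (2 / β) ^ N * (gK c η N * Real.exp (-|t|)) := by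
  have hβ0 : 0 < β := by linarith
  have h := kummer_rem q hq (2 * ((c : ℂ) + t * Complex.I) / (β : ℂ)) N
  rw [z_norm _ β hβ] at h
  rw [norm_mul]
  have h2 : 2 / β * ‖(c : ℂ) + t * Complex.I‖ ≤ ‖(c : ℂ) + t * Complex.I‖ :=
    mul_le_of_le_one_left (norm_nonneg _) ((div_le_one hβ0).2 hβ)
  calc _ ≤ ‖gker c η t‖ * ((2 / β * ‖(c : ℂ) + t * Complex.I‖) ^ N *
        Real.exp (‖(c : ℂ) + t * Complex.I‖)) := by
        refine mul_le_mul_of_nonneg_left (h.trans ?_) (norm_nonneg _)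
        gcongr
    _ = (2 / β) ^ N * (‖gker c η t‖ * (‖(c : ℂ) + t * Complex.I‖ ^ N *
        Real.exp ‖(c : ℂ) + t * Complex.I‖)) := by rw [mul_pow]; ring
    _ ≤ _ := by
      exact mul_le_mul_of_nonneg_left (g_total c η t hc0 hc1 N) (by positivity)

lemma gM_integrable (q c η β : ℝ) (hq : 0 ≤ q) (hc0 : 0 < c) (hc1 : c < 1) (hβ : 2 ≤ β) :
    Integrable (fun t : ℝ => gker c η t * kummerM ((q : ℂ) + 1) ((q : ℂ) + 5 / 2)
        (2 * ((c : ℂ) + t * Complex.I) / (β : ℂ))) := by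
  refine (exp_neg_abs_integrable.const_mul (gK c η 0)).mono' ?_ (ae_of_all _ fun t => ?_)
  · refine Measurable.aestronglyMeasurable ((gker_meas c η).mul ?_)
    exact (kummer_meas q hq).comp (by fun_prop)
  · simpa using rem_bound q c η β t hq hc0 hc1 hβ 0

lemma F1_eq (q c η β : ℝ) (hc0 : 0 < c) :
    F1 q c η β = (1 / 2 : ℂ) * ∫ t : ℝ, gker c η t * kummerM ((q : ℂ) + 1) ((q : ℂ) + 5 / 2)
        (2 * ((c : ℂ) + t * Complex.I) / (β : ℂ)) := by
  have hpi : (π : ℂ) ≠ 0 := by exact_mod_cast Real.pi_ne_zero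
  have : (1 / 2 : ℂ) = (1 / (2 * (π : ℂ))) * π := by field_simp
  unfold F1
  rw [this, mul_assoc]
  congr 1
  rw [← integral_const_mul]
  refine integral_congr_ae (ae_of_all _ fun t => ?_)
  beta_reduce
  have hs : (c : ℂ) + t * Complex.I ≠ 0 := by
    intro h
    have := congrArg Complex.re h
    simp at this
    exact hc0.ne' this
  unfold gker
  generalize kummerM _ _ _ = M
  generalize Complex.sin _ = S
  generalize (c : ℂ) + t * Complex.I = s at hs
  generalize Complex.exp _ = E
  rw [div_eq_iff hs]
  ring

lemma Phi_eq (q c η β : ℝ) (k : ℕ) :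
    ((ccoef q k : ℝ) : ℂ) * (β : ℂ) ^ (-(k : ℤ)) * Phi1 c k η =
      (1 / 2 : ℂ) * ∫ t : ℝ, gker c η t *
        ((kA q k : ℂ) * (2 * ((c : ℂ) + t * Complex.I) / (β : ℂ)) ^ k) := by
  have hcc : ccoef q k = 2 ^ k * kA q k := by
    unfold ccoef kA
    rw [mul_comm (k.factorial : ℝ), mul_div_assoc]
  have : ∀ t : ℝ, gker c η t *
        ((kA q k : ℂ) * (2 * ((c : ℂ) + t * Complex.I) / (β : ℂ)) ^ k) =
      ((ccoef q k : ℝ) : ℂ) * (β : ℂ) ^ (-(k : ℤ)) *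
      (Complex.exp ((η : ℂ) * ((c : ℂ) + t * Complex.I)) *
      ((c : ℂ) + t * Complex.I) ^ k / Complex.sin ((π : ℂ) * ((c : ℂ) + t * Complex.I))) := by
    intro t
    rw [hcc, zpow_neg, zpow_natCast, div_pow, mul_pow]
    unfold gker
    push_cast
    ring
  simp_rw [this]
  rw [integral_const_mul]
  unfold Phi1
  ring

lemma term_integrable (q c η β : ℝ) (hc0 : 0 < c) (hc1 : c < 1) (k : ℕ) :
    Integrable (fun t : ℝ => gker c η t *
        ((kA q k : ℂ) * (2 * ((c : ℂ) + t * Complex.I) / (β : ℂ)) ^ k)) := by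
  convert (gpow_integrable c η hc0 hc1 k).const_mul ((kA q k : ℂ) * (2 / (β : ℂ)) ^ k) using 2 with t
  rw [mul_div_right_comm, mul_pow]
  ring

theorem stmt11 (q c η : ℝ) (hq : 0 ≤ q) (hhalf : ∀ k : ℕ, q ≠ (k : ℝ) + 1 / 2)
    (hc0 : 0 < c) (hc1 : c < 1) :
    ∀ N : ℕ, 1 ≤ N →
      (fun β : ℝ => F1 q c η β -
          ∑ k ∈ Finset.range N, ((ccoef q k : ℝ) : ℂ) * (β : ℂ) ^ (-(k : ℤ)) *
            Phi1 c k η) =O[atTop]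
        (fun β : ℝ => β ^ (-(N : ℝ))) := by
  intro N _
  refine IsBigO.of_bound (1 / 2 * (2 ^ N * ∫ t : ℝ, gK c η N * Real.exp (-|t|))) ?_
  filter_upwards [eventually_ge_atTop (2 : ℝ)] with β hβ
  have hβ0 : 0 < β := by linarith
  rw [F1_eq q c η β hc0, Finset.sum_congr rfl (fun k _ => Phi_eq q c η β k), ← Finset.mul_sum,
    ← integral_finsetSum _ (fun k _ => term_integrable q c η β hc0 hc1 k), ← mul_sub,
    ← integral_sub (gM_integrable q c η β hq hc0 hc1 hβ)
      (integrable_finsetSum _ (fun k _ => term_integrable q c η β hc0 hc1 k))]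
  simp_rw [← Finset.mul_sum, ← mul_sub]
  have h := norm_integral_le_of_norm_le
    ((exp_neg_abs_integrable.const_mul (gK c η N)).const_mul ((2 / β) ^ N))
    (ae_of_all volume fun t => rem_bound q c η β t hq hc0 hc1 hβ N)
  rw [integral_const_mul] at h
  rw [norm_mul, Real.norm_of_nonneg (Real.rpow_nonneg hβ0.le _), Real.rpow_neg hβ0.le,
    Real.rpow_natCast]
  have e : ‖(1 / 2 : ℂ)‖ = 1 / 2 := by simp
  rw [e]
  refine (mul_le_mul_of_nonneg_left h (by norm_num)).trans (le_of_eq ?_)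
  rw [div_pow]
  ring
end

section
/- Let q ≥ 0 with q not of the form k + 1/2 for a nonnegative integer k, let η ∈ ℝ be fixed, and let 0 < c < 1. Define F_q^{(2)}(η,β) = (1/(2π)) ∫_{-∞}^∞ e^{η(c+it)} (π(c+it)/sin(π(c+it))) M(−1/2; −q−1/2; 2(c+it)/β) /(c+it)^{q+5/2} dt (principal branch), coefficients d_k = 2^k (−1/2)_k/(k! (−q−1/2)_k), and Φ_k^{(2)}(η,q) = (1/2) ∫_{-∞}^∞ e^{η(c+it)} (c+it)^{k−q−3/2} / sin(π(c+it)) dt (principal branch). Then for every integer N ≥ 1, as β → +∞, F_q^{(2)}(η,β) − Σ_{k=0}^{N−1} d_k β^{−k} Φ_k^{(2)}(η,q) = O(β^{−N}). -/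
open Real MeasureTheory Set Finset Filter Asymptotics

/-- The function `F_q^{(2)}(η,β)` (principal branch of the complex power). -/
noncomputable def F2 (q c η β : ℝ) : ℂ :=
  (1 / (2 * (π : ℂ))) * ∫ t : ℝ,
    Complex.exp ((η : ℂ) * ((c : ℂ) + t * Complex.I)) *
      ((π : ℂ) * ((c : ℂ) + t * Complex.I) /
        Complex.sin ((π : ℂ) * ((c : ℂ) + t * Complex.I))) *
      kummerM (-1 / 2) (-(q : ℂ) - 1 / 2)
        (2 * ((c : ℂ) + t * Complex.I) / (β : ℂ)) /
          ((c : ℂ) + t * Complex.I) ^ ((q : ℂ) + 5 / 2)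

/-- The coefficients `d_k = 2^k (−1/2)_k/(k! (−q−1/2)_k)`. -/
noncomputable def dcoef (q : ℝ) (k : ℕ) : ℝ :=
  2 ^ k * (ascPochhammer ℝ k).eval (-1 / 2 : ℝ) /
    (k.factorial * (ascPochhammer ℝ k).eval (-q - 1 / 2))

/-- The auxiliary function `Φ_k^{(2)}(η,q)` (principal branch of the complex power). -/
noncomputable def Phi2 (c : ℝ) (k : ℕ) (η q : ℝ) : ℂ :=
  (1 / 2 : ℂ) * ∫ t : ℝ, Complex.exp ((η : ℂ) * ((c : ℂ) + t * Complex.I)) *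
      ((c : ℂ) + t * Complex.I) ^ ((k : ℂ) - (q : ℂ) - 3 / 2) /
        Complex.sin ((π : ℂ) * ((c : ℂ) + t * Complex.I))


namespace KummerAux

/-- coefficient of the Kummer series -/
noncomputable def kc (q : ℝ) (k : ℕ) : ℂ :=
  (ascPochhammer ℂ k).eval (-1 / 2) /
      ((ascPochhammer ℂ k).eval (-(q : ℂ) - 1 / 2) * (k.factorial : ℂ))

lemma poch_cast (x : ℝ) (k : ℕ) :
    (((ascPochhammer ℝ k).eval x : ℝ) : ℂ) = (ascPochhammer ℂ k).eval (x : ℂ) := by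
  induction k with
  | zero => simp
  | succ k ih => simp [ascPochhammer_succ_eval, ih]

lemma dcoef_eq (q : ℝ) (k : ℕ) : ((dcoef q k : ℝ) : ℂ) = 2 ^ k * kc q k := by
  unfold dcoef kc
  push_cast [poch_cast]
  rw [mul_comm (k.factorial : ℂ), mul_div_assoc]

lemma ratio_bdd (q : ℝ) :
    ∃ A : ℝ, 0 < A ∧ ∀ j : ℕ, ‖(-1 / 2 + j : ℂ) / (-(q : ℂ) - 1 / 2 + j)‖ ≤ A := by
  have h0 : Tendsto (fun j : ℕ => (-1 / 2 + j : ℝ) / (-q - 1 / 2 + j)) atTop (nhds 1) := by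
    have h := tendsto_add_mul_div_add_mul_atTop_nhds (𝕜 := ℝ) (-1 / 2) (-q - 1 / 2) 1 (d := 1) one_ne_zero
    simpa using h
  obtain ⟨A, hA⟩ := h0.norm.bddAbove_range
  refine ⟨max A 1, by positivity, fun j => le_max_of_le_left ?_⟩
  have := hA ⟨j, rfl⟩
  refine le_trans (le_of_eq ?_) this
  beta_reduce
  rw [← Complex.norm_real]
  push_cast
  rfl

lemma kc_bound {q A : ℝ}
    (hA : ∀ j : ℕ, ‖(-1 / 2 + j : ℂ) / (-(q : ℂ) - 1 / 2 + j)‖ ≤ A) (k : ℕ) :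
    ‖kc q k‖ ≤ A ^ k / k.factorial := by
  have : ‖(ascPochhammer ℂ k).eval (-1 / 2) / (ascPochhammer ℂ k).eval (-(q : ℂ) - 1 / 2)‖
      ≤ A ^ k := by
    induction k with
    | zero => simp
    | succ k ih =>
      rw [ascPochhammer_succ_eval, ascPochhammer_succ_eval, mul_div_mul_comm, norm_mul, pow_succ]
      exact mul_le_mul ih (hA k) (norm_nonneg _) ((norm_nonneg _).trans ih)
  unfold kc
  rw [← div_div, norm_div, Complex.norm_natCast]
  gcongr

lemma summ {q A : ℝ} (hA0 : 0 < A)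
    (hA : ∀ j : ℕ, ‖(-1 / 2 + j : ℂ) / (-(q : ℂ) - 1 / 2 + j)‖ ≤ A) (z : ℂ) (k : ℕ) :
    ‖kc q k * z ^ k‖ ≤ (A * ‖z‖) ^ k / k.factorial := by
  rw [norm_mul, norm_pow, mul_pow, mul_div_right_comm]
  gcongr
  exact kc_bound hA k

lemma hasSum_kummer {q A : ℝ} (hA0 : 0 < A)
    (hA : ∀ j : ℕ, ‖(-1 / 2 + j : ℂ) / (-(q : ℂ) - 1 / 2 + j)‖ ≤ A) (z : ℂ) :
    HasSum (fun k => kc q k * z ^ k) (kummerM (-1 / 2) (-(q : ℂ) - 1 / 2) z) := by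
  have : Summable (fun k => kc q k * z ^ k) :=
    Summable.of_norm_bounded (Real.summable_pow_div_factorial (A * ‖z‖)) (summ hA0 hA z)
  exact this.hasSum

lemma tail {q A : ℝ} (hA0 : 0 < A)
    (hA : ∀ j : ℕ, ‖(-1 / 2 + j : ℂ) / (-(q : ℂ) - 1 / 2 + j)‖ ≤ A) (z : ℂ) (N : ℕ) :
    ‖kummerM (-1 / 2) (-(q : ℂ) - 1 / 2) z - ∑ k ∈ Finset.range N, kc q k * z ^ k‖
      ≤ (A * ‖z‖) ^ N * Real.exp (A * ‖z‖) := by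
  have h1 := (hasSum_nat_add_iff' N).2 (hasSum_kummer hA0 hA z)
  have h2 : HasSum (fun k => (A * ‖z‖) ^ k / k.factorial) (Real.exp (A * ‖z‖)) := by
    rw [Real.exp_eq_exp_ℝ]
    exact NormedSpace.expSeries_div_hasSum_exp (A * ‖z‖)
  have h3 := (hasSum_nat_add_iff' N).2 h2
  have h4 := h1.norm_le_of_bounded h3 (fun k => summ hA0 hA z (k + N))
  refine h4.trans ?_
  have h5 := Complex.norm_exp_sub_sum_le_norm_mul_exp ((A * ‖z‖ : ℝ) : ℂ) N
  rw [Complex.norm_real, Real.norm_of_nonneg (by positivity)] at h5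
  refine le_trans ?_ h5
  refine le_trans (le_abs_self _) (le_of_eq ?_)
  rw [← Real.norm_eq_abs, ← Complex.norm_real]
  push_cast
  rfl

lemma meas_kummer {q A : ℝ} (hA0 : 0 < A)
    (hA : ∀ j : ℕ, ‖(-1 / 2 + j : ℂ) / (-(q : ℂ) - 1 / 2 + j)‖ ≤ A) :
    Measurable (fun z => kummerM (-1 / 2) (-(q : ℂ) - 1 / 2) z) := by
  refine measurable_of_tendsto_metrizable
    (f := fun (n : ℕ) (z : ℂ) => ∑ k ∈ Finset.range n, kc q k * z ^ k) (fun n => by fun_prop) ?_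
  rw [tendsto_pi_nhds]
  exact fun z => (hasSum_kummer hA0 hA z).tendsto_sum_nat

/-- the point on the contour -/
noncomputable def S (c t : ℝ) : ℂ := (c : ℂ) + t * Complex.I

/-- the common kernel -/
noncomputable def G (q c η t : ℝ) : ℂ :=
  Complex.exp ((η : ℂ) * S c t) * S c t ^ (-(q : ℂ) - 3 / 2) / Complex.sin ((π : ℂ) * S c t)

lemma S_re (c t : ℝ) : (S c t).re = c := by simp [S]

lemma S_im (c t : ℝ) : (S c t).im = t := by simp [S]

lemma S_ne {c : ℝ} (hc0 : 0 < c) (t : ℝ) : S c t ≠ 0 := by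
  intro h
  have := S_re c t
  rw [h] at this
  simp at this
  linarith

lemma S_le {c : ℝ} (hc0 : 0 < c) (hc1 : c < 1) (t : ℝ) : ‖S c t‖ ≤ 1 + |t| := by
  refine (Complex.norm_le_abs_re_add_abs_im _).trans ?_
  rw [S_re, S_im, abs_of_pos hc0]
  linarith

lemma le_S (c t : ℝ) : c ≤ ‖S c t‖ := by
  have := Complex.re_le_norm (S c t)
  rwa [S_re] at this

lemma cont_S (c : ℝ) : Continuous (S c) := by unfold S; fun_prop

lemma sin_lower {c : ℝ} (hc0 : 0 < c) (hc1 : c < 1) (t : ℝ) :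
    Real.sin (π * c) * (Real.exp (π * |t|) / 2) ≤ ‖Complex.sin ((π : ℂ) * S c t)‖ := by
  have hs : 0 < Real.sin (π * c) :=
    Real.sin_pos_of_pos_of_lt_pi (by positivity) (by nlinarith [Real.pi_pos])
  have h1 : (Complex.sin ((π : ℂ) * S c t)).re = Real.sin (π * c) * Real.cosh (π * t) := by
    have : (π : ℂ) * S c t = ((π * c : ℝ) : ℂ) + ((π * t : ℝ) : ℂ) * Complex.I := by
      unfold S; push_cast; ring
    rw [this, Complex.sin_add_mul_I, ← Complex.ofReal_sin, ← Complex.ofReal_cosh,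
      ← Complex.ofReal_cos, ← Complex.ofReal_sinh]
    simp only [Complex.add_re, Complex.re_mul_ofReal, Complex.ofReal_re, Complex.mul_re,
      Complex.I_re, Complex.I_im, Complex.ofReal_im, Complex.mul_im]
    ring
  refine le_trans ?_ (Complex.re_le_norm _)
  rw [h1]
  gcongr
  rw [← Real.cosh_abs, abs_mul, abs_of_pos Real.pi_pos, Real.cosh_eq]
  have := Real.exp_pos (-(π * |t|))
  linarith

lemma meas_G (q c η : ℝ) : Measurable (G q c η) := by
  have h := (cont_S c).measurable
  unfold G
  fun_prop

lemma G_bound {q c : ℝ} (η : ℝ) (hq : 0 ≤ q) (hc0 : 0 < c) (hc1 : c < 1) :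
    ∃ C : ℝ, 0 < C ∧ ∀ t, ‖G q c η t‖ ≤ C * Real.exp (-(3 * |t|)) := by
  have hs : 0 < Real.sin (π * c) :=
    Real.sin_pos_of_pos_of_lt_pi (by positivity) (by nlinarith [Real.pi_pos])
  refine ⟨Real.exp (η * c) * c ^ (-q - 3 / 2) / (Real.sin (π * c) / 2), by positivity, fun t => ?_⟩
  unfold G
  have e1 : ‖Complex.exp ((η : ℂ) * S c t)‖ = Real.exp (η * c) := by
    rw [Complex.norm_exp]; simp [S_re]
  have e2 : ‖S c t ^ (-(q : ℂ) - 3 / 2)‖ ≤ c ^ (-q - 3 / 2) := by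
    have hh : (-(q : ℂ) - 3 / 2) = ((-q - 3 / 2 : ℝ) : ℂ) := by push_cast; ring
    rw [hh, Complex.norm_cpow_of_ne_zero (S_ne hc0 t)]
    simp only [Complex.ofReal_re, Complex.ofReal_im, mul_zero, Real.exp_zero, div_one]
    exact Real.rpow_le_rpow_of_nonpos hc0 (le_S c t) (by linarith)
  rw [norm_div, norm_mul, e1]
  have e3 : Real.sin (π * c) / 2 * Real.exp (3 * |t|) ≤ ‖Complex.sin ((π : ℂ) * S c t)‖ := by
    refine le_trans ?_ (sin_lower hc0 hc1 t)
    have : Real.exp (3 * |t|) ≤ Real.exp (π * |t|) := by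
      gcongr
      exact Real.pi_gt_three.le
    nlinarith
  calc _ ≤ Real.exp (η * c) * c ^ (-q - 3 / 2) / (Real.sin (π * c) / 2 * Real.exp (3 * |t|)) := by
        gcongr
    _ = _ := by rw [Real.exp_neg, ← div_div, div_eq_mul_inv _ (Real.exp _)]

lemma pow_bound (N : ℕ) {c : ℝ} (hc0 : 0 < c) (hc1 : c < 1) (t : ℝ) :
    ‖S c t‖ ^ N ≤ N.factorial * Real.exp (1 + |t|) := by
  have h := Real.pow_div_factorial_le_exp (1 + |t|) (by positivity) N
  rw [div_le_iff₀ (by positivity)] at h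
  calc _ ≤ (1 + |t|) ^ N := by gcongr; exact S_le hc0 hc1 t
    _ ≤ _ := by linarith

lemma int_exp : Integrable (fun t : ℝ => Real.exp (-|t|)) := by
  refine (integrable_inv_one_add_sq.const_mul 2).mono' (by fun_prop) ?_
  refine Eventually.of_forall fun t => ?_
  have h := Real.quadratic_le_exp_of_nonneg (abs_nonneg t)
  rw [sq_abs] at h
  rw [Real.norm_of_nonneg (Real.exp_pos _).le, Real.exp_neg, ← div_eq_mul_inv,
    inv_eq_one_div, div_le_div_iff₀ (Real.exp_pos _) (by positivity)]
  linarith [abs_nonneg t]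

lemma int_k {q c : ℝ} (η : ℝ) (hq : 0 ≤ q) (hc0 : 0 < c) (hc1 : c < 1) (k : ℕ) :
    Integrable (fun t => G q c η t * S c t ^ k) := by
  obtain ⟨C, hC, hG⟩ := G_bound η hq hc0 hc1
  refine Integrable.mono' (int_exp.const_mul (C * k.factorial * Real.exp 1)) ?_ ?_
  · have := meas_G q c η
    have := (cont_S c).measurable
    exact Measurable.aestronglyMeasurable (by fun_prop)
  · refine Eventually.of_forall fun t => ?_
    rw [norm_mul, norm_pow]
    calc _ ≤ C * Real.exp (-(3 * |t|)) * (k.factorial * Real.exp (1 + |t|)) := by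
          gcongr
          · exact hG t
          · exact pow_bound k hc0 hc1 t
      _ = C * k.factorial * Real.exp 1 * Real.exp (-(2 * |t|)) := by
          rw [show -(3 * |t|) = -(2 * |t|) + -|t| by ring, Real.exp_add, Real.exp_add, Real.exp_neg |t|]
          field_simp
      _ ≤ _ := by
          gcongr
          linarith [abs_nonneg t]

lemma F2_eq {q c : ℝ} (η β : ℝ) (hc0 : 0 < c) :
    F2 q c η β = (1 / 2 : ℂ) * ∫ t : ℝ, G q c η t *
      kummerM (-1 / 2) (-(q : ℂ) - 1 / 2) (2 * S c t / β) := by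
  unfold F2
  rw [← integral_const_mul, ← integral_const_mul]
  congr 1
  ext t
  have hpi : (π : ℂ) ≠ 0 := by exact_mod_cast Real.pi_ne_zero
  unfold G
  have hS := S_ne hc0 t
  change _ * (Complex.exp ((η : ℂ) * S c t) * ((π : ℂ) * S c t / Complex.sin ((π : ℂ) * S c t)) *
    kummerM (-1 / 2) (-(q : ℂ) - 1 / 2) (2 * S c t / β) / S c t ^ ((q : ℂ) + 5 / 2)) = _
  have h1 : S c t ^ (-(q : ℂ) - 3 / 2) = S c t / S c t ^ ((q : ℂ) + 5 / 2) := by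
    rw [show -(q : ℂ) - 3 / 2 = 1 - ((q : ℂ) + 5 / 2) by ring, Complex.cpow_sub _ _ hS,
      Complex.cpow_one]
  rw [h1]
  simp only [div_eq_mul_inv, mul_inv]
  linear_combination (1 / 2 : ℂ) * Complex.exp ((η : ℂ) * S c t) * S c t * (Complex.sin ((π : ℂ) * S c t))⁻¹ * kummerM (-1 * 2⁻¹) (-(q : ℂ) - 1 * 2⁻¹) (2 * S c t * (β : ℂ)⁻¹) * (S c t ^ ((q : ℂ) + 5 * 2⁻¹))⁻¹ * (inv_mul_cancel₀ hpi)

lemma Phi2_eq {q c : ℝ} (η : ℝ) (hc0 : 0 < c) (k : ℕ) :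
    Phi2 c k η q = (1 / 2 : ℂ) * ∫ t : ℝ, G q c η t * S c t ^ k := by
  unfold Phi2
  congr 2
  ext t
  have hS := S_ne hc0 t
  change Complex.exp ((η : ℂ) * S c t) * S c t ^ ((k : ℂ) - q - 3 / 2) /
    Complex.sin ((π : ℂ) * S c t) = _
  rw [show (k : ℂ) - q - 3 / 2 = (-(q : ℂ) - 3 / 2) + k by ring, Complex.cpow_add _ _ hS,
    Complex.cpow_natCast]
  unfold G
  ring

lemma rem_bound {q c A C η β : ℝ} (N : ℕ) (hc0 : 0 < c) (hc1 : c < 1)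
    (hA0 : 0 < A) (hC : 0 < C)
    (hA : ∀ j : ℕ, ‖(-1 / 2 + j : ℂ) / (-(q : ℂ) - 1 / 2 + j)‖ ≤ A)
    (hG : ∀ t, ‖G q c η t‖ ≤ C * Real.exp (-(3 * |t|))) (hβ : 2 * A ≤ β) (t : ℝ) :
    ‖G q c η t * (kummerM (-1 / 2) (-(q : ℂ) - 1 / 2) (2 * S c t / β) -
      ∑ k ∈ Finset.range N, kc q k * (2 * S c t / β) ^ k)‖ ≤
      C * (2 * A) ^ N * N.factorial * Real.exp 1 * Real.exp 1 * β⁻¹ ^ N * Real.exp (-|t|) := by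
  have hβ0 : 0 < β := by linarith
  have hz : A * ‖2 * S c t / (β : ℂ)‖ = 2 * A * β⁻¹ * ‖S c t‖ := by
    rw [norm_div, norm_mul, Complex.norm_real, Real.norm_of_nonneg hβ0.le]
    simp
    ring
  have h1 := tail hA0 hA (2 * S c t / β) N
  rw [hz] at h1
  have h2 : 2 * A * β⁻¹ * ‖S c t‖ ≤ 1 + |t| := by
    have : 2 * A * β⁻¹ ≤ 1 := by
      rw [← div_eq_mul_inv, div_le_one hβ0]; exact hβ
    calc _ ≤ 1 * ‖S c t‖ := by gcongr
      _ ≤ _ := by rw [one_mul]; exact S_le hc0 hc1 t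
  rw [norm_mul]
  calc _ ≤ (C * Real.exp (-(3 * |t|))) *
        ((2 * A * β⁻¹) ^ N * (N.factorial * Real.exp (1 + |t|)) * Real.exp (1 + |t|)) := by
        refine mul_le_mul (hG t) (h1.trans ?_) (norm_nonneg _) (by positivity)
        rw [mul_pow _ ‖S c t‖]
        gcongr
        exact pow_bound N hc0 hc1 t
    _ = _ := by
        rw [show -(3 * |t|) = -|t| + -|t| + -|t| by ring, Real.exp_add, Real.exp_add,
          Real.exp_add, Real.exp_neg |t|, mul_pow _ β⁻¹]
        field_simp

end KummerAux

open KummerAux in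
theorem stmt12 (q c η : ℝ) (hq : 0 ≤ q) (hhalf : ∀ k : ℕ, q ≠ (k : ℝ) + 1 / 2)
    (hc0 : 0 < c) (hc1 : c < 1) :
    ∀ N : ℕ, 1 ≤ N →
      (fun β : ℝ => F2 q c η β -
          ∑ k ∈ Finset.range N, ((dcoef q k : ℝ) : ℂ) * (β : ℂ) ^ (-(k : ℤ)) *
            Phi2 c k η q) =O[atTop]
        (fun β : ℝ => β ^ (-(N : ℝ))) := by
  intro N _
  obtain ⟨A, hA0, hA⟩ := ratio_bdd q
  obtain ⟨C, hC, hG⟩ := G_bound η hq hc0 hc1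
  set D : ℝ := C * (2 * A) ^ N * N.factorial * Real.exp 1 * Real.exp 1 with hD
  have hD0 : 0 < D := by positivity
  refine IsBigO.of_bound (1 / 2 * (D * ∫ t : ℝ, Real.exp (-|t|))) ?_
  filter_upwards [eventually_ge_atTop (2 * A)] with β hβ
  have hβ0 : 0 < β := by linarith
  have hr := rem_bound (β := β) N hc0 hc1 hA0 hC hA hG hβ
  have hbi : Integrable (fun t : ℝ => D * β⁻¹ ^ N * Real.exp (-|t|)) := int_exp.const_mul _
  have hmS := (cont_S c).measurable
  have hmG := meas_G q c η
  have hmK := (meas_kummer hA0 hA).comp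
    (show Measurable (fun t : ℝ => 2 * S c t / (β : ℂ)) by fun_prop)
  have hRi : Integrable (fun t : ℝ => G q c η t *
      (kummerM (-1 / 2) (-(q : ℂ) - 1 / 2) (2 * S c t / β) -
        ∑ k ∈ Finset.range N, kc q k * (2 * S c t / β) ^ k)) := by
    refine hbi.mono' (Measurable.aestronglyMeasurable ?_) (Eventually.of_forall hr)
    exact hmG.mul (hmK.sub (by fun_prop))
  have hki : ∀ k ∈ Finset.range N, Integrable (fun t : ℝ =>
      ((dcoef q k : ℝ) : ℂ) * (β : ℂ) ^ (-(k : ℤ)) * (G q c η t * S c t ^ k)) :=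
    fun k _ => (int_k η hq hc0 hc1 k).const_mul _
  have key : F2 q c η β - ∑ k ∈ Finset.range N, ((dcoef q k : ℝ) : ℂ) * (β : ℂ) ^ (-(k : ℤ)) *
            Phi2 c k η q = (1 / 2 : ℂ) * ∫ t : ℝ, G q c η t *
      (kummerM (-1 / 2) (-(q : ℂ) - 1 / 2) (2 * S c t / β) -
        ∑ k ∈ Finset.range N, kc q k * (2 * S c t / β) ^ k) := by
    have hsplit : (fun t : ℝ => G q c η t *
        kummerM (-1 / 2) (-(q : ℂ) - 1 / 2) (2 * S c t / β)) = fun t : ℝ => G q c η t *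
      (kummerM (-1 / 2) (-(q : ℂ) - 1 / 2) (2 * S c t / β) -
        ∑ k ∈ Finset.range N, kc q k * (2 * S c t / β) ^ k) + ∑ k ∈ Finset.range N,
        ((dcoef q k : ℝ) : ℂ) * (β : ℂ) ^ (-(k : ℤ)) * (G q c η t * S c t ^ k) := by
      ext t
      have : ∑ k ∈ Finset.range N,
        ((dcoef q k : ℝ) : ℂ) * (β : ℂ) ^ (-(k : ℤ)) * (G q c η t * S c t ^ k) =
        G q c η t * ∑ k ∈ Finset.range N, kc q k * (2 * S c t / β) ^ k := by
        rw [Finset.mul_sum]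
        refine Finset.sum_congr rfl fun k _ => ?_
        rw [dcoef_eq, zpow_neg, zpow_natCast, div_pow, mul_pow]
        ring
      rw [this]
      ring
    rw [F2_eq η β hc0, hsplit, integral_add hRi (integrable_finsetSum _ hki),
      integral_finsetSum _ hki, mul_add, Finset.mul_sum, add_sub_assoc, add_eq_left, sub_eq_zero]
    refine Finset.sum_congr rfl fun k _ => ?_
    rw [integral_const_mul, Phi2_eq η hc0]
    ring
  rw [key, norm_mul]
  have hle := norm_integral_le_of_norm_le hbi (Eventually.of_forall hr)
  rw [integral_const_mul] at hle
  rw [Real.norm_of_nonneg (by positivity), Real.rpow_neg hβ0.le, Real.rpow_natCast, ← inv_pow]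
  have hn : ‖(1 / 2 : ℂ)‖ = 1 / 2 := by simp
  rw [hn]
  nlinarith [hle]
end
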